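/- Let E be a graph with finitely many vertices in which every transition state has exactly one outgoing edge. Then the family of sets (saturation of H(γ)) \ (saturation of H(γ) \ γ), indexed by the components γ ∈ Γ_E, is a partition of E⁰: these sets are pairwise disjoint for distinct components and their union is all of E⁰. -/

import Mathlib

attribute [local instance] Classical.propDecidable

/-- A directed graph: a set of vertices, a set of edges, and source/range maps. -/
structure DirGraph : Type 1 where
  V : Type
  E : Type
  s : E → V
  r : E → V

namespace DirGraph

variable (G : DirGraph)

/-- A vertex is regular if it emits a finite nonzero number of edges. -/
def Regular (v : G.V) : Prop :=
  {e : G.E | G.s e = v}.Finite ∧ {e : G.E | G.s e = v}.Nonempty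

/-- A vertex is a sink if it emits no edges. -/
def IsSink (v : G.V) : Prop := ∀ e : G.E, G.s e ≠ v

/-- A vertex is an infinite emitter if it emits infinitely many edges. -/
def InfiniteEmitter (v : G.V) : Prop := {e : G.E | G.s e = v}.Infinite

/-- One-step reachability: there is an edge from `u` to `v`. -/
def Step (u v : G.V) : Prop := ∃ e : G.E, G.s e = u ∧ G.r e = v

/-- `Reach u v` means there is a (possibly empty) path from `u` to `v`, i.e. `u ≥ v`. -/
def Reach : G.V → G.V → Prop := Relation.ReflTransGen G.Step

/-- A vertex supports a cycle if there is a nonempty path from it to itself. -/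
def SupportsCycle (v : G.V) : Prop := Relation.TransGen G.Step v v

/-- A transition state is a regular vertex which does not support a cycle. -/
def TransitionState (v : G.V) : Prop := G.Regular v ∧ ¬ G.SupportsCycle v

/-- A set of vertices is hereditary if it is closed under reachability. -/
def Hereditary (H : Set G.V) : Prop := ∀ u v : G.V, u ∈ H → G.Reach u v → v ∈ H

/-- A set of vertices is saturated if it contains every regular vertex all of whose
emitted edges end in the set. -/
def Saturated (S : Set G.V) : Prop :=
  ∀ v : G.V, G.Regular v → (∀ e : G.E, G.s e = v → G.r e ∈ S) → v ∈ S

/-- `H(S)`: the smallest hereditary set containing `S`. -/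
def heredClosure (S : Set G.V) : Set G.V := ⋂₀ {H : Set G.V | G.Hereditary H ∧ S ⊆ H}

/-- The saturation of `S`: the smallest saturated set containing `S`. -/
def saturate (S : Set G.V) : Set G.V := ⋂₀ {T : Set G.V | G.Saturated T ∧ S ⊆ T}

/-- A nonempty set is strongly connected if any two of its vertices are joined by
a nonempty path. -/
def StronglyConn (S : Set G.V) : Prop :=
  S.Nonempty ∧ ∀ u ∈ S, ∀ v ∈ S, Relation.TransGen G.Step u v

/-- The components of `G` (elements of `Γ_E`): maximal strongly connected subsets together
with singletons of singular vertices not supporting a cycle. -/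
def IsComponent (γ : Set G.V) : Prop :=
  (G.StronglyConn γ ∧ ∀ δ : Set G.V, G.StronglyConn δ → γ ⊆ δ → δ = γ) ∨
  (∃ v : G.V, γ = {v} ∧ ¬ G.Regular v ∧ ¬ G.SupportsCycle v)

/-- The order on components: `γ ≥ δ` iff some vertex of `γ` reaches some vertex of `δ`. -/
def CompGE (γ δ : Set G.V) : Prop := ∃ u ∈ γ, ∃ w ∈ δ, G.Reach u w

/-- `η` is a hereditary set of components. -/
def HeredComp (η : Set (Set G.V)) : Prop :=
  (∀ γ ∈ η, G.IsComponent γ) ∧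
  ∀ γ δ : Set G.V, γ ∈ η → G.IsComponent δ → G.CompGE γ δ → δ ∈ η

/-- A list of edges is a path if consecutive edges are composable. -/
def IsPathChain (p : List G.E) : Prop := List.Chain' (fun e f => G.r e = G.s f) p

/-- `p` is a return path based at `v`: a nonempty path from `v` to `v` not revisiting `v`
before the final edge. -/
def IsReturnPath (v : G.V) (p : List G.E) : Prop :=
  ∃ h : p ≠ [], G.IsPathChain p ∧ G.s (p.head h) = v ∧ G.r (p.getLast h) = v ∧
    ∀ e ∈ p.dropLast, G.r e ≠ v

/-- `v` supports (at least) two distinct return paths. -/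
def TwoReturnPaths (v : G.V) : Prop :=
  ∃ p q : List G.E, G.IsReturnPath v p ∧ G.IsReturnPath v q ∧ p ≠ q

/-- `v` supports a unique return path. -/
def UniqueReturnPath (v : G.V) : Prop := ∃! p : List G.E, G.IsReturnPath v p

/-- A component is cyclic if each of its vertices supports exactly one return path. -/
def CyclicComponent (γ : Set G.V) : Prop :=
  G.IsComponent γ ∧ ∀ v ∈ γ, G.UniqueReturnPath v

/-- Condition (K): every vertex supports either no return path or at least two. -/
def ConditionK : Prop :=
  ∀ v : G.V, (¬ ∃ p : List G.E, G.IsReturnPath v p) ∨ G.TwoReturnPaths v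

/-- The cycle (or path) `p` has an exit. -/
def HasExit (p : List G.E) : Prop := ∃ f e : G.E, e ∈ p ∧ G.s f = G.s e ∧ f ≠ e

/-- `p` is a nonempty path from `v` to `w`. -/
def IsPathFromTo (v w : G.V) (p : List G.E) : Prop :=
  ∃ h : p ≠ [], G.IsPathChain p ∧ G.s (p.head h) = v ∧ G.r (p.getLast h) = w

/-- Condition (H). -/
def ConditionH : Prop :=
  ∀ v : G.V, G.Regular v → G.UniqueReturnPath v →
    (∀ p : List G.E, G.IsReturnPath v p → ¬ G.HasExit p) ∨
    ∃ w : G.V, w ≠ v ∧ (¬ G.Regular w ∨ G.UniqueReturnPath w) ∧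
      (∃ p : List G.E, G.IsPathFromTo v w p) ∧
      ∀ p : List G.E, G.IsPathFromTo v w p → ∀ e ∈ p,
        ¬ G.TwoReturnPaths (G.s e) ∧ ¬ G.TwoReturnPaths (G.r e)

/-- The temperature `τ_E(γ) = sgn(|γ¹| − |γ|)` of a set of vertices, with the conventions
`sgn(0) = 0` and `sgn(∞) = 1`. -/
noncomputable def temp (γ : Set G.V) : ℤ :=
  if {e : G.E | G.s e ∈ γ ∧ G.r e ∈ γ}.Infinite then 1
  else Int.sign ((Nat.card {e : G.E | G.s e ∈ γ ∧ G.r e ∈ γ} : ℤ) - (Nat.card γ : ℤ))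

end DirGraph

/-!
From a transition state there is only one way to go. Hence a vertex `v` lies in the saturation of
a hereditary set `H` exactly when the forced walk from `v` through transition states meets `H`.
Applied to the hereditary sets `H(γ)` and `H(γ) \ γ`, this says that `v` lies in the difference of
their saturations exactly when its walk meets `γ`. A component contains no transition state, so the
walk can meet one only where it leaves the transition states. The differences are therefore
disjoint and cover precisely the vertices from which a non-transition state can be reached. With
only finitely many transition states every vertex is of this kind, since a transition state lies on
no cycle.
-/

namespace DirGraph

variable {G : DirGraph} {S T H γ : Set G.V} {u v w x : G.V}

theorem mem_heredClosure : v ∈ G.heredClosure S ↔ ∃ u ∈ S, G.Reach u v := by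
  constructor
  · intro h
    refine h {v | ∃ u ∈ S, G.Reach u v} ⟨?_, fun u hu => ⟨u, hu, .refl⟩⟩
    rintro a b ⟨u, hu, hua⟩ hab
    exact ⟨u, hu, hua.trans hab⟩
  · rintro ⟨u, hu, huv⟩ H ⟨hH, hS⟩
    exact hH u v (hS hu) huv

theorem hereditary_heredClosure (S : Set G.V) : G.Hereditary (G.heredClosure S) :=
  fun u v hu huv H hH => hH.1 u v (hu H hH) huv

theorem subset_saturate (S : Set G.V) : S ⊆ G.saturate S :=
  Set.subset_sInter fun _ hT => hT.2

theorem saturate_subset (hT : G.Saturated T) (hST : S ⊆ T) : G.saturate S ⊆ T :=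
  Set.sInter_subset_of_mem ⟨hT, hST⟩

theorem saturated_saturate (S : Set G.V) : G.Saturated (G.saturate S) :=
  fun v hv h T hT => hT.1 v hv fun e he => h e he T hT

/-- The strongly connected class of `v`: all vertices `u` with `v ≥ u` and `u ≥ v`. It contains `v`
even if `v` lies on no cycle, so it need not satisfy `StronglyConn`, which asks for nonempty paths.
The components are the classes of the vertices that are not transition states. -/
def scc (v : G.V) : Set G.V := {u | AntisymmRel G.Reach v u}

theorem mem_scc_self (v : G.V) : v ∈ scc v := ⟨.refl, .refl⟩

theorem stronglyConn_scc (hv : G.SupportsCycle v) : G.StronglyConn (scc v) :=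
  ⟨⟨v, mem_scc_self v⟩, fun _ ha _ hb => (Relation.TransGen.trans_right ha.2 hv).trans_left hb.1⟩

theorem scc_eq_singleton (hv : ¬ G.SupportsCycle v) : scc v = {v} := by
  refine Set.Subset.antisymm ?_ (Set.singleton_subset_iff.2 (mem_scc_self v))
  rintro u ⟨hvu, huv⟩
  rcases Relation.reflTransGen_iff_eq_or_transGen.1 hvu with heq | hvu
  · exact heq
  · exact absurd (hvu.trans_left huv) hv

theorem StronglyConn.subset_scc (hS : G.StronglyConn S) (hv : v ∈ S) : S ⊆ scc v :=
  fun u hu => ⟨(hS.2 v hv u hu).to_reflTransGen, (hS.2 u hu v hv).to_reflTransGen⟩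

theorem isComponent_scc (hv : ¬ G.TransitionState v) : G.IsComponent (scc v) := by
  by_cases hc : G.SupportsCycle v
  · exact .inl ⟨stronglyConn_scc hc,
      fun δ hδ hsub => (hδ.subset_scc (hsub (mem_scc_self v))).antisymm hsub⟩
  · exact .inr ⟨v, scc_eq_singleton hc, fun hr => hv ⟨hr, hc⟩, hc⟩

theorem IsComponent.eq_scc (hγ : G.IsComponent γ) (hw : w ∈ γ) : γ = scc w := by
  rcases hγ with ⟨hconn, hmax⟩ | ⟨v, rfl, -, hv⟩
  · exact (hmax _ (stronglyConn_scc (hconn.2 w hw w hw)) (hconn.subset_scc hw)).symm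
  · obtain rfl : w = v := hw
    exact (scc_eq_singleton hv).symm

theorem IsComponent.not_transitionState (hγ : G.IsComponent γ) (hw : w ∈ γ) :
    ¬ G.TransitionState w := by
  rintro ⟨hreg, hcyc⟩
  rcases hγ with ⟨hconn, -⟩ | ⟨v, rfl, hv, -⟩
  · exact hcyc (hconn.2 w hw w hw)
  · obtain rfl : w = v := hw
    exact hv hreg

theorem IsComponent.hereditary_diff (hγ : G.IsComponent γ) :
    G.Hereditary (G.heredClosure γ \ γ) := by
  rintro u v ⟨hu, huγ⟩ huv
  refine ⟨hereditary_heredClosure γ u v hu huv, fun hv => huγ ?_⟩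
  obtain ⟨a, ha, hau⟩ := mem_heredClosure.1 hu
  rw [hγ.eq_scc hv] at ha ⊢
  exact ⟨ha.1.trans hau, huv⟩

/-- One-step reachability restricted to steps that start at a transition state. Its right-uniqueness
says that every transition state has a single successor, parallel edges being allowed. -/
def TransitionStep (G : DirGraph) (u v : G.V) : Prop := G.TransitionState u ∧ G.Step u v

/-- Reachability by a possibly empty path all of whose edges start at transition states; the final
vertex need not be one. It describes how a hereditary set grows under saturation. -/
def TransitionReach (G : DirGraph) : G.V → G.V → Prop := Relation.ReflTransGen G.TransitionStep

theorem rightUnique_transitionStep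
    (ht : ∀ v : G.V, G.TransitionState v → ∃! e : G.E, G.s e = v) :
    Relator.RightUnique G.TransitionStep := by
  rintro u _ _ ⟨hu, e, he, rfl⟩ ⟨-, f, hf, rfl⟩
  rw [(ht u hu).unique he hf]

theorem TransitionReach.reach (h : G.TransitionReach v w) : G.Reach v w :=
  Relation.ReflTransGen.mono (fun _ _ hstep => hstep.2) v w h

theorem TransitionReach.eq_of_not_transitionState (h : G.TransitionReach v w)
    (hv : ¬ G.TransitionState v) : v = w := by
  rcases h.cases_head with rfl | ⟨u, hvu, -⟩
  · rfl
  · exact absurd hvu.1 hv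

theorem Reach.exists_transitionReach (h : G.Reach v x) (hx : ¬ G.TransitionState x) :
    ∃ w, ¬ G.TransitionState w ∧ G.TransitionReach v w ∧ G.Reach w x := by
  induction h using Relation.ReflTransGen.head_induction_on with
  | refl => exact ⟨x, hx, .refl, .refl⟩
  | @head u v huv hvx ih =>
    by_cases hu : G.TransitionState u
    · obtain ⟨w, hw, hvw, hwx⟩ := ih
      exact ⟨w, hw, .head ⟨hu, huv⟩ hvw, hwx⟩
    · exact ⟨u, hu, .refl, .head huv hvx⟩

theorem exists_reach_not_transitionState (hfin : {v | G.TransitionState v}.Finite) (v : G.V) :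
    ∃ w, G.Reach v w ∧ ¬ G.TransitionState w := by
  let R : G.V → G.V → Prop := fun w v => G.TransitionState v ∧ Relation.TransGen G.Step v w
  have : IsStrictOrder G.V R :=
    { irrefl := fun _ h => h.1.2 h.2
      trans := fun _ _ _ hab hbc => ⟨hbc.1, hbc.2.trans hab.2⟩ }
  by_cases hv : G.TransitionState v
  · refine hfin.wellFoundedOn.induction (r := R)
      (P := fun u => ∃ w, G.Reach u w ∧ ¬ G.TransitionState w) hv fun u hu ih => ?_
    obtain ⟨e, he⟩ := hu.1.2
    have hstep : G.Step u (G.r e) := ⟨e, he, rfl⟩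
    by_cases hr : G.TransitionState (G.r e)
    · obtain ⟨w, hrw, hw⟩ := ih (G.r e) hr ⟨hu, .single hstep⟩
      exact ⟨w, .head hstep hrw, hw⟩
    · exact ⟨G.r e, .single hstep, hr⟩
  · exact ⟨v, .refl, hv⟩

theorem TransitionReach.reach_of_reach (hG : Relator.RightUnique G.TransitionStep)
    (hvw : G.TransitionReach v w) (hvx : G.Reach v x) (hx : ¬ G.TransitionState x) :
    G.Reach w x := by
  obtain ⟨y, hy, hvy, hyx⟩ := hvx.exists_transitionReach hx
  rcases Relation.ReflTransGen.total_of_right_unique hG hvw hvy with hwy | hyw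
  · exact (TransitionReach.reach hwy).trans hyx
  · exact TransitionReach.eq_of_not_transitionState hyw hy ▸ hyx

theorem TransitionReach.mem_saturate (hG : Relator.RightUnique G.TransitionStep)
    (h : G.TransitionReach v w) (hw : w ∈ G.saturate S) : v ∈ G.saturate S := by
  induction h using Relation.ReflTransGen.head_induction_on with
  | refl => exact hw
  | head huv _ ih =>
    refine saturated_saturate S _ huv.1.1 fun e he => ?_
    rwa [hG ⟨huv.1, e, he, rfl⟩ huv]

theorem Hereditary.saturated_setOf_transitionReach (hG : Relator.RightUnique G.TransitionStep)
    (hH : G.Hereditary H) : G.Saturated {v | ∃ w ∈ H, G.TransitionReach v w} := by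
  intro v hreg hrange
  by_cases hcyc : G.SupportsCycle v
  · obtain ⟨_, ⟨e, he, rfl⟩, hcycle⟩ := Relation.TransGen.head'_iff.1 hcyc
    obtain ⟨w, hw, hew⟩ := hrange e he
    exact ⟨v, hH w v hw (hew.reach_of_reach hG hcycle fun hv => hv.2 hcyc), .refl⟩
  · obtain ⟨e, he⟩ := hreg.2
    obtain ⟨w, hw, hew⟩ := hrange e he
    exact ⟨w, hw, .head ⟨⟨hreg, hcyc⟩, e, he, rfl⟩ hew⟩

theorem Hereditary.mem_saturate_iff (hG : Relator.RightUnique G.TransitionStep)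
    (hH : G.Hereditary H) : v ∈ G.saturate H ↔ ∃ w ∈ H, G.TransitionReach v w :=
  ⟨fun hv =>
    saturate_subset (hH.saturated_setOf_transitionReach hG) (fun w hw => ⟨w, hw, .refl⟩) hv,
    fun ⟨_, hw, hvw⟩ => hvw.mem_saturate hG (subset_saturate H hw)⟩

theorem IsComponent.mem_saturate_diff_iff (hG : Relator.RightUnique G.TransitionStep)
    (hγ : G.IsComponent γ) :
    v ∈ G.saturate (G.heredClosure γ) \ G.saturate (G.heredClosure γ \ γ) ↔
      ∃ w ∈ γ, G.TransitionReach v w := by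
  rw [Set.mem_sdiff, (hereditary_heredClosure γ).mem_saturate_iff hG,
    hγ.hereditary_diff.mem_saturate_iff hG]
  constructor
  · rintro ⟨⟨w, hw, hvw⟩, hnot⟩
    by_contra hγw
    exact hnot ⟨w, ⟨hw, fun hwγ => hγw ⟨w, hwγ, hvw⟩⟩, hvw⟩
  · rintro ⟨w, hw, hvw⟩
    refine ⟨⟨w, mem_heredClosure.2 ⟨w, hw, .refl⟩, hvw⟩, ?_⟩
    rintro ⟨x, hx, hvx⟩
    have hxw : G.Reach x w := hvx.reach_of_reach hG hvw.reach (hγ.not_transitionState hw)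
    exact (hγ.hereditary_diff x w hx hxw).2 hw

theorem IsComponent.eq_of_transitionReach {δ : Set G.V}
    (hG : Relator.RightUnique G.TransitionStep) (hγ : G.IsComponent γ) (hδ : G.IsComponent δ)
    (hw : w ∈ γ) (hvw : G.TransitionReach v w) (hx : x ∈ δ) (hvx : G.TransitionReach v x) :
    γ = δ := by
  have hwx : G.Reach w x := hvw.reach_of_reach hG hvx.reach (hδ.not_transitionState hx)
  have hxw : G.Reach x w := hvx.reach_of_reach hG hvw.reach (hγ.not_transitionState hw)
  have hxγ : x ∈ γ := by
    rw [hγ.eq_scc hw]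
    exact ⟨hwx, hxw⟩
  rw [hγ.eq_scc hxγ, hδ.eq_scc hx]

end DirGraph

open DirGraph in
theorem stmt5_general (G : DirGraph) (hG : Relator.RightUnique G.TransitionStep) :
    (∀ γ δ : Set G.V, G.IsComponent γ → G.IsComponent δ → γ ≠ δ →
      Disjoint (G.saturate (G.heredClosure γ) \ G.saturate (G.heredClosure γ \ γ))
        (G.saturate (G.heredClosure δ) \ G.saturate (G.heredClosure δ \ δ))) ∧
    (⋃ γ ∈ {γ : Set G.V | G.IsComponent γ},
      (G.saturate (G.heredClosure γ) \ G.saturate (G.heredClosure γ \ γ))) =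
      {v | ∃ w, G.Reach v w ∧ ¬ G.TransitionState w} := by
  refine ⟨fun γ δ hγ hδ hne => Set.disjoint_left.2 fun v hvγ hvδ => hne ?_, ?_⟩
  · obtain ⟨w, hw, hvw⟩ := (hγ.mem_saturate_diff_iff hG).1 hvγ
    obtain ⟨x, hx, hvx⟩ := (hδ.mem_saturate_diff_iff hG).1 hvδ
    exact hγ.eq_of_transitionReach hG hδ hw hvw hx hvx
  · ext v
    simp only [Set.mem_iUnion]
    constructor
    · rintro ⟨γ, hγ, hv⟩
      obtain ⟨w, hw, hvw⟩ := (IsComponent.mem_saturate_diff_iff hG hγ).1 hv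
      exact ⟨w, hvw.reach, IsComponent.not_transitionState hγ hw⟩
    · rintro ⟨x, hvx, hx⟩
      obtain ⟨w, hw, hvw, -⟩ := hvx.exists_transitionReach hx
      have hcomp := isComponent_scc hw
      exact ⟨scc w, hcomp, (hcomp.mem_saturate_diff_iff hG).2 ⟨w, mem_scc_self w, hvw⟩⟩

open DirGraph in
/-- Lemma `lem:structure-2(iii)`: if every transition state of `G` has
exactly one outgoing edge, then the sets
`saturation of H(γ) \ saturation of (H(γ) \ γ)`, for `γ ∈ Γ_E`, partition `E⁰`. -/
theorem stmt5 (G : DirGraph) (hcE : Countable G.E) (hfin : Finite G.V)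
    (ht : ∀ v : G.V, G.TransitionState v → ∃! e : G.E, G.s e = v) :
    (∀ γ δ : Set G.V, G.IsComponent γ → G.IsComponent δ → γ ≠ δ →
      Disjoint (G.saturate (G.heredClosure γ) \ G.saturate (G.heredClosure γ \ γ))
        (G.saturate (G.heredClosure δ) \ G.saturate (G.heredClosure δ \ δ))) ∧
    (⋃ γ ∈ {γ : Set G.V | G.IsComponent γ},
      (G.saturate (G.heredClosure γ) \ G.saturate (G.heredClosure γ \ γ))) =
      Set.univ := by
  obtain ⟨hdisj, hunion⟩ := stmt5_general G (rightUnique_transitionStep ht)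
  exact ⟨hdisj, hunion.trans <|
    Set.eq_univ_of_forall (exists_reach_not_transitionState (Set.toFinite _))⟩
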